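/- arXiv:2101.03984 — 2 statements merged into one kernel-verified Lean document; each statement's English description precedes it below -/
import Mathlib

section
/- For every α ∈ V* one has ‖λ²(α)‖ = ‖α‖, ‖λ⁴(α)‖ = ‖α‖ and ‖λ⁶(α)‖ = ‖α‖; in particular λ², λ⁴ and λ⁶ are injective linear isometries from V* into Λ²(ℝ⁸)*, Λ⁴(ℝ⁸)* and Λ⁶(ℝ⁸)* respectively. -/
open scoped BigOperators

noncomputable section

namespace FMpaper

variable {K : Type*} [NormedField K] [NormedAlgebra ℝ K]

/-- Coefficient model for the exterior algebra of `(ℝⁿ)*` with scalars in `K`: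
a form is given by its coefficients on the basis `e^S`, `S ⊆ {0, …, n-1}` sorted. -/
abbrev Form (K : Type*) (n : ℕ) := Finset (Fin n) → K

variable {n : ℕ}

/-- Sign such that `e^s ∧ e^t = signMerge s t • e^(s ∪ t)` for disjoint sorted `s, t`. -/
def signMerge (s t : Finset (Fin n)) : K :=
  (-1 : K) ^ (((s ×ˢ t).filter (fun p => p.2 < p.1)).card)

/-- Wedge product. -/
def wedge (α β : Form K n) : Form K n :=
  fun u => ∑ s ∈ u.powerset, signMerge s (u \ s) * α s * β (u \ s)

/-- Hodge star operator (for the standard inner product and orientation `e^{0⋯(n-1)}`). -/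
def hstar (α : Form K n) : Form K n :=
  fun t => signMerge tᶜ t * α tᶜ

/-- Interior product with the basis vector `e_μ`. -/
def iprodB (μ : Fin n) (α : Form K n) : Form K n :=
  fun t => if μ ∈ t then 0
    else (-1 : K) ^ ((t.filter (fun j => j < μ)).card) * α (insert μ t)

/-- Interior product with the vector `v`. -/
def iprod (v : Fin n → K) (α : Form K n) : Form K n :=
  fun t => ∑ μ, v μ * iprodB μ α t

/-- The basis covector `e^i` as a 1-form. -/
def e1 (i : Fin n) : Form K n := fun s => if s = {i} then 1 else 0

/-- The covector `v♭` dual to a vector `v`. -/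
def flat (v : Fin n → K) : Form K n := ∑ i, v i • e1 i

/-- The vector `α♯` dual to a 1-form `α`. -/
def sharp1 (α : Form K n) : Fin n → K := fun i => α {i}

/-- The inner product of forms (extended `K`-bilinearly). -/
def inner' (α β : Form K n) : K := ∑ s, α s * β s

/-- The (Euclidean) norm of a form; for an `√-1 ℝ`-valued form `√-1 γ` this is `‖γ‖`. -/
def fnorm (α : Form K n) : ℝ := Real.sqrt (∑ s, ‖α s‖ ^ 2)

/-- `α` is homogeneous of degree `k`. -/
def isGrade (k : ℕ) (α : Form K n) : Prop := ∀ s, s.card ≠ k → α s = 0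

/-- Evaluation of a `k`-form on `k` vectors. -/
def evalForm {k : ℕ} (α : Form K n) (v : Fin k → (Fin n → K)) : K :=
  ∑ s : Finset (Fin n), α s *
    (if h : s.card = k then
      Matrix.det (Matrix.of fun i j => v i ((s.orderIsoOfFin h j : Fin n))) else 0)

/-- The matrix of the skew-symmetric endomorphism `γ♯` associated with a 2-form `γ`
via `⟨γ♯ u, v⟩ = γ(u, v)`. -/
def mat2 (γ : Form K n) : Matrix (Fin n) (Fin n) K :=
  Matrix.of fun i j => if i < j then γ {i, j} else if j < i then - γ {i, j} else 0

/-- The standard `G₂` 3-form `φ = e^{123}+e^{145}+e^{167}+e^{246}−e^{257}−e^{347}−e^{356}`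
on `ℝ⁷` (indices `1, …, 7` shifted to `0, …, 6`). -/
def phi7 : Form K 7 := fun s =>
  if s = ({0, 1, 2} : Finset (Fin 7)) then 1
  else if s = ({0, 3, 4} : Finset (Fin 7)) then 1
  else if s = ({0, 5, 6} : Finset (Fin 7)) then 1
  else if s = ({1, 3, 5} : Finset (Fin 7)) then 1
  else if s = ({1, 4, 6} : Finset (Fin 7)) then -1
  else if s = ({2, 3, 6} : Finset (Fin 7)) then -1
  else if s = ({2, 4, 5} : Finset (Fin 7)) then -1
  else 0

/-- `*₇φ = e^{4567}+e^{2367}+e^{2345}+e^{1357}−e^{1346}−e^{1256}−e^{1247}` on `ℝ⁷`. -/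
def psi7 : Form K 7 := fun s =>
  if s = ({3, 4, 5, 6} : Finset (Fin 7)) then 1
  else if s = ({1, 2, 5, 6} : Finset (Fin 7)) then 1
  else if s = ({1, 2, 3, 4} : Finset (Fin 7)) then 1
  else if s = ({0, 2, 4, 6} : Finset (Fin 7)) then 1
  else if s = ({0, 2, 3, 5} : Finset (Fin 7)) then -1
  else if s = ({0, 1, 4, 5} : Finset (Fin 7)) then -1
  else if s = ({0, 1, 3, 6} : Finset (Fin 7)) then -1
  else 0

/-- The `G₂` 3-form `φ` on `V = span{e₁, …, e₇} ⊂ ℝ⁸`, regarded as a form on `ℝ⁸`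
annihilated by `i(e₀)` (indices `1, …, 7` of `ℝ⁸`). -/
def phi8 : Form K 8 := fun s =>
  if s = ({1, 2, 3} : Finset (Fin 8)) then 1
  else if s = ({1, 4, 5} : Finset (Fin 8)) then 1
  else if s = ({1, 6, 7} : Finset (Fin 8)) then 1
  else if s = ({2, 4, 6} : Finset (Fin 8)) then 1
  else if s = ({2, 5, 7} : Finset (Fin 8)) then -1
  else if s = ({3, 4, 7} : Finset (Fin 8)) then -1
  else if s = ({3, 5, 6} : Finset (Fin 8)) then -1
  else 0

/-- `*₇φ` on `V ⊂ ℝ⁸`, regarded as a 4-form on `ℝ⁸` annihilated by `i(e₀)`. -/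
def psi8 : Form K 8 := fun s =>
  if s = ({4, 5, 6, 7} : Finset (Fin 8)) then 1
  else if s = ({2, 3, 6, 7} : Finset (Fin 8)) then 1
  else if s = ({2, 3, 4, 5} : Finset (Fin 8)) then 1
  else if s = ({1, 3, 5, 7} : Finset (Fin 8)) then 1
  else if s = ({1, 3, 4, 6} : Finset (Fin 8)) then -1
  else if s = ({1, 2, 5, 6} : Finset (Fin 8)) then -1
  else if s = ({1, 2, 4, 7} : Finset (Fin 8)) then -1
  else 0

/-- The standard Cayley 4-form `Φ = e⁰ ∧ φ + *₇φ` on `ℝ⁸`. -/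
def Phi8 : Form K 8 := wedge (e1 0) phi8 + psi8

/-- The index set of `V = span{e₁, …, e₇} ⊂ ℝ⁸`. -/
def Vset : Finset (Fin 8) := {1, 2, 3, 4, 5, 6, 7}

/-- The Hodge star `*₇` of `V ⊂ ℝ⁸` (volume form `e^{1⋯7}`), acting on forms on `ℝ⁸`
annihilated by `i(e₀)`. -/
def star7 (α : Form K 8) : Form K 8 :=
  fun t => if (0 : Fin 8) ∈ t then 0 else signMerge (Vset \ t) t * α (Vset \ t)

/-- `α` is (the pullback of) a form on `V`, i.e. `i(e₀) α = 0`. -/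
def onV (α : Form K 8) : Prop := ∀ s, (0 : Fin 8) ∈ s → α s = 0

/-- `λ²(α) = ½ (e⁰ ∧ α + i(α♯) φ)` for `α ∈ V*`. -/
def lambda2 (α : Form K 8) : Form K 8 :=
  (2 : K)⁻¹ • (wedge (e1 0) α + iprod (sharp1 α) phi8)

/-- `λ⁴(α) = (1/√8) (e⁰ ∧ i(α♯) *₇φ − α ∧ φ)` for `α ∈ V*`. -/
def lambda4 (α : Form K 8) : Form K 8 :=
  (algebraMap ℝ K (Real.sqrt 8))⁻¹ • (wedge (e1 0) (iprod (sharp1 α) psi8) - wedge α phi8)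

/-- `λ⁶(α) = *₈ λ²(α)` for `α ∈ V*`. -/
def lambda6 (α : Form K 8) : Form K 8 := hstar (lambda2 α)

/-- The projection `π²₇(α) = (α + *₈(Φ ∧ α))/4` onto `Λ²₇`. -/
def pi27 (α : Form K 8) : Form K 8 := (4 : K)⁻¹ • (α + hstar (wedge Phi8 α))

/-- The projection `π⁴₇(β) = Σ_{μ=1}^{7} ⟨β, λ⁴(e^μ)⟩ λ⁴(e^μ)` onto `Λ⁴₇`. -/
def pi47 (β : Form K 8) : Form K 8 :=
  ∑ μ : Fin 7, inner' β (lambda4 (e1 μ.succ)) • lambda4 (e1 μ.succ)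

/-- `τ(u₀,u₁,u₂,u₃) = Σ_{μ=1}^{7} λ⁴(e^μ)(u₀,u₁,u₂,u₃) ⬝ λ⁴(e^μ) = π⁴₇(u₀♭∧u₁♭∧u₂♭∧u₃♭)`. -/
def tau4 (u : Fin 4 → (Fin 8 → K)) : Form K 8 :=
  ∑ μ : Fin 7, evalForm (lambda4 (e1 μ.succ)) u • lambda4 (e1 μ.succ)

/-- Partial derivative `∂f^a/∂x^j` at `x`. -/
def pd {m p : ℕ} (f : (Fin m → ℝ) → (Fin p → ℝ)) (x : Fin m → ℝ) (j : Fin m) (a : Fin p) : ℝ :=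
  fderiv ℝ f x (Pi.single j 1) a

/-!
Each coefficient of `i(v)φ`, `i(v)*₇φ` and `α ∧ φ` has at most one nonzero term. Indeed the
monomials of `φ` are the lines of the Fano plane, those of `*₇φ` their complements, and two
distinct monomials of either form differ by more than the exchange of one index. Hence no cross
terms occur in the norms, the signs in `φ` are irrelevant, and one only counts: a point lies on
`3` of the `7` lines and off the other `4`, so `‖i(α♯)φ‖² = 3‖α‖²` and `‖i(α♯)*₇φ‖² = ‖α ∧ φ‖² =
4‖α‖²`. The terms with and without `e⁰` are orthogonal, which gives `‖λ²(α)‖² = (1 + 3)/4 ‖α‖²`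
and `‖λ⁴(α)‖² = (4 + 4)/8 ‖α‖²`.
-/

theorem norm_sum_sq_of_subsingleton {ι E : Type*} [SeminormedAddCommGroup E] {s : Finset ι}
    {f : ι → E} (h : {i | i ∈ s ∧ f i ≠ 0}.Subsingleton) :
    ‖∑ i ∈ s, f i‖ ^ 2 = ∑ i ∈ s, ‖f i‖ ^ 2 := by
  by_cases hf : ∃ i ∈ s, f i ≠ 0
  · obtain ⟨i, hi, hfi⟩ := hf
    have hzero : ∀ j ∈ s, j ≠ i → f j = 0 := fun j hj hji ↦
      by_contra fun hfj ↦ hji (h ⟨hj, hfj⟩ ⟨hi, hfi⟩)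
    rw [Finset.sum_eq_single_of_mem i hi hzero,
      Finset.sum_eq_single_of_mem i hi fun j hj hji ↦ by simp [hzero j hj hji]]
  · push Not at hf
    rw [Finset.sum_eq_zero hf, Finset.sum_eq_zero fun i hi ↦ by simp [hf i hi]]
    simp

theorem sum_insert_of_notMem {ι M : Type*} [Fintype ι] [DecidableEq ι] [AddCommMonoid M] (i : ι)
    (f : Finset ι → M) : ∑ t with i ∉ t, f (insert i t) = ∑ s with i ∈ s, f s :=
  Finset.sum_nbij' (insert i) (Finset.erase · i) (by simp) (by simp)
    (fun t ht ↦ Finset.erase_insert (Finset.mem_filter_univ t |>.1 ht))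
    (fun s hs ↦ Finset.insert_erase (Finset.mem_filter_univ s |>.1 hs)) fun _ _ ↦ rfl

section Norm

variable {𝕜 : Type*} [NormedField 𝕜] {m : ℕ}

theorem fnorm_nonneg (α : Form 𝕜 m) : 0 ≤ fnorm α :=
  Real.sqrt_nonneg _

theorem fnorm_sq (α : Form 𝕜 m) : fnorm α ^ 2 = ∑ s, ‖α s‖ ^ 2 :=
  Real.sq_sqrt (by positivity)

theorem fnorm_neg (α : Form 𝕜 m) : fnorm (-α) = fnorm α := by
  simp [fnorm]

theorem fnorm_smul (c : 𝕜) (α : Form 𝕜 m) : fnorm (c • α) = ‖c‖ * fnorm α := by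
  simp [fnorm, mul_pow, ← Finset.mul_sum]

theorem fnorm_add_sq_of_disjoint_support {α β : Form 𝕜 m}
    (h : Disjoint (Function.support α) (Function.support β)) :
    fnorm (α + β) ^ 2 = fnorm α ^ 2 + fnorm β ^ 2 := by
  simp only [fnorm_sq, ← Finset.sum_add_distrib]
  refine Finset.sum_congr rfl fun s _ ↦ ?_
  by_cases hs : α s = 0
  · simp [hs]
  · simp [Function.notMem_support.1 (Set.disjoint_left.1 h hs)]

theorem norm_signMerge (s t : Finset (Fin m)) : ‖(signMerge s t : 𝕜)‖ = 1 := by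
  simp [signMerge]

theorem fnorm_hstar (α : Form 𝕜 m) : fnorm (hstar α) = fnorm α := by
  have hsum : ∑ t, ‖α tᶜ‖ ^ 2 = ∑ t, ‖α t‖ ^ 2 :=
    compl_involutive.bijective.sum_comp fun t ↦ ‖α t‖ ^ 2
  simp [fnorm, hstar, norm_signMerge, hsum]

theorem sum_powerset_eq_sum_singleton_of_isGrade_one {M : Type*} [AddCommMonoid M] {α : Form 𝕜 m}
    (hα : isGrade 1 α) (u : Finset (Fin m)) {f : Finset (Fin m) → M}
    (hf : ∀ s, α s = 0 → f s = 0) : ∑ s ∈ u.powerset, f s = ∑ μ ∈ u, f {μ} := by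
  have hcard : ∑ s ∈ u.powersetCard 1, f s = ∑ s ∈ u.powerset, f s :=
    Finset.sum_subset (fun s hs ↦ Finset.mem_powerset.2 (Finset.mem_powersetCard.1 hs).1)
      fun s hs hs' ↦ hf s <| hα s fun h ↦
        hs' (Finset.mem_powersetCard.2 ⟨Finset.mem_powerset.1 hs, h⟩)
  rw [← hcard, Finset.powersetCard_one, Finset.sum_map]
  rfl

theorem fnorm_sq_of_isGrade_one {α : Form 𝕜 m} (hα : isGrade 1 α) :
    fnorm α ^ 2 = ∑ μ, ‖α {μ}‖ ^ 2 := by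
  rw [fnorm_sq, ← Finset.powerset_univ]
  exact sum_powerset_eq_sum_singleton_of_isGrade_one hα _ fun s hs ↦ by simp [hs]

theorem wedge_apply_of_isGrade_one {α : Form 𝕜 m} (hα : isGrade 1 α) (β : Form 𝕜 m)
    (u : Finset (Fin m)) :
    wedge α β u = ∑ μ ∈ u, signMerge {μ} (u \ {μ}) * α {μ} * β (u \ {μ}) :=
  sum_powerset_eq_sum_singleton_of_isGrade_one hα u fun s hs ↦ by simp [hs]

theorem fnorm_wedge_sq_of_subsingleton {α β : Form 𝕜 m} (hα : isGrade 1 α)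
    (h : ∀ u, {μ | μ ∈ u ∧ α {μ} ≠ 0 ∧ β (u \ {μ}) ≠ 0}.Subsingleton) :
    fnorm (wedge α β) ^ 2 = ∑ μ, ‖α {μ}‖ ^ 2 * ∑ s with μ ∉ s, ‖β s‖ ^ 2 := by
  have hcoeff : ∀ u, ‖wedge α β u‖ ^ 2 = ∑ μ ∈ u, ‖α {μ}‖ ^ 2 * ‖β (u \ {μ})‖ ^ 2 := fun u ↦ by
    rw [wedge_apply_of_isGrade_one hα, norm_sum_sq_of_subsingleton]
    · simp [norm_signMerge, mul_pow]
    · exact (h u).anti fun μ hμ ↦ by simp_all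
  simp only [fnorm_sq, hcoeff, Finset.mul_sum]
  rw [Finset.sum_comm' (t' := Finset.univ) (s' := fun μ ↦ {u | μ ∈ u}) (by simp)]
  refine Finset.sum_congr rfl fun μ _ ↦ ?_
  rw [← sum_insert_of_notMem]
  refine Finset.sum_congr rfl fun s hs ↦ ?_
  rw [Finset.sdiff_singleton_eq_erase, Finset.erase_insert (Finset.mem_filter_univ s |>.1 hs)]

theorem fnorm_iprod_sq_of_subsingleton {β : Form 𝕜 m} (v : Fin m → 𝕜)
    (h : ∀ t, {μ | μ ∉ t ∧ β (insert μ t) ≠ 0}.Subsingleton) :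
    fnorm (iprod v β) ^ 2 = ∑ μ, ‖v μ‖ ^ 2 * ∑ s with μ ∈ s, ‖β s‖ ^ 2 := by
  have hcoeff : ∀ t, ‖iprod v β t‖ ^ 2 =
      ∑ μ, if μ ∉ t then ‖v μ‖ ^ 2 * ‖β (insert μ t)‖ ^ 2 else 0 := fun t ↦ by
    rw [iprod, norm_sum_sq_of_subsingleton]
    · refine Finset.sum_congr rfl fun μ _ ↦ ?_
      by_cases hμ : μ ∈ t <;> simp [iprodB, hμ, mul_pow]
    · exact (h t).anti fun μ hμ ↦ by simp_all [iprodB]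
  simp only [fnorm_sq, hcoeff]
  rw [Finset.sum_comm]
  refine Finset.sum_congr rfl fun μ _ ↦ ?_
  rw [← Finset.sum_filter, ← Finset.mul_sum, sum_insert_of_notMem μ fun s ↦ ‖β s‖ ^ 2]

theorem isGrade_one_e1 (μ : Fin m) : isGrade 1 (e1 μ : Form 𝕜 m) := fun s hs ↦
  if_neg fun h ↦ hs (by simp [h])

theorem fnorm_wedge_e1 {μ : Fin m} {β : Form 𝕜 m} (hβ : ∀ s, μ ∈ s → β s = 0) :
    fnorm (wedge (e1 μ) β) = fnorm β := by
  have hsingle : ∀ ν, (e1 μ {ν} : 𝕜) = if ν = μ then 1 else 0 := fun ν ↦ by simp [e1]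
  have hsupp : ∑ s with μ ∉ s, ‖β s‖ ^ 2 = ∑ s, ‖β s‖ ^ 2 :=
    Finset.sum_filter_of_ne fun s _ hs hμ ↦ hs (by simp [hβ s hμ])
  rw [← sq_eq_sq₀ (fnorm_nonneg _) (fnorm_nonneg _),
    fnorm_wedge_sq_of_subsingleton (isGrade_one_e1 μ), fnorm_sq, ← hsupp]
  · simp [hsingle, apply_ite]
  · refine fun u ↦ Set.subsingleton_of_subset_singleton (a := μ) fun ν hν ↦ ?_
    by_contra hne
    exact hν.2.1 ((hsingle ν).trans (if_neg hne))

theorem wedge_e1_apply_of_notMem {μ : Fin m} {u : Finset (Fin m)} (hμ : μ ∉ u) (β : Form 𝕜 m) :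
    wedge (e1 μ) β u = 0 :=
  Finset.sum_eq_zero fun s hs ↦ by
    have hne : s ≠ {μ} := fun h ↦ hμ (by simpa [h] using hs)
    simp [e1, hne]

/-- The monomials of `β` differ pairwise by more than the exchange of one index, so that neither
contracting two of them with basis vectors nor wedging them with basis covectors can produce the
same monomial. -/
def HasSeparatedSupport (β : Form 𝕜 m) : Prop :=
  (Function.support β).Pairwise fun s t ↦ 1 < (s \ t).card

theorem HasSeparatedSupport.fnorm_iprod_sq {β : Form 𝕜 m} (hβ : HasSeparatedSupport β)
    (v : Fin m → 𝕜) :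
    fnorm (iprod v β) ^ 2 = ∑ μ, ‖v μ‖ ^ 2 * ∑ s with μ ∈ s, ‖β s‖ ^ 2 := by
  refine fnorm_iprod_sq_of_subsingleton v fun t μ hμ ν hν ↦ by_contra fun hne ↦ ?_
  have hdiff : insert μ t \ insert ν t ⊆ {μ} := by grind
  have hinsert : insert μ t ≠ insert ν t := fun h ↦
    hne ((Finset.mem_insert.1 (h ▸ Finset.mem_insert_self μ t)).resolve_right hμ.1)
  exact (hβ hμ.2 hν.2 hinsert).not_ge (Finset.card_le_card hdiff)

theorem HasSeparatedSupport.fnorm_wedge_sq {α β : Form 𝕜 m} (hβ : HasSeparatedSupport β)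
    (hα : isGrade 1 α) :
    fnorm (wedge α β) ^ 2 = ∑ μ, ‖α {μ}‖ ^ 2 * ∑ s with μ ∉ s, ‖β s‖ ^ 2 := by
  refine fnorm_wedge_sq_of_subsingleton hα fun u μ hμ ν hν ↦ by_contra fun hne ↦ ?_
  have hdiff : (u \ {μ}) \ (u \ {ν}) ⊆ {ν} := by grind
  have hsdiff : u \ {μ} ≠ u \ {ν} := fun h ↦ by
    have hmem : μ ∈ u \ {ν} := Finset.mem_sdiff.2 ⟨hμ.1, by simpa using hne⟩
    simp [← h] at hmem
  exact (hβ hμ.2.2 hν.2.2 hsdiff).not_ge (Finset.card_le_card hdiff)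

theorem hasSeparatedSupport_of_norm_eq_ite {β : Form 𝕜 m} {𝓑 : Finset (Finset (Fin m))}
    (hβ : ∀ s, ‖β s‖ = if s ∈ 𝓑 then 1 else 0)
    (h𝓑 : (𝓑 : Set (Finset (Fin m))).Pairwise fun s t ↦ 1 < (s \ t).card) :
    HasSeparatedSupport β :=
  h𝓑.mono fun s hs ↦ by
    by_contra hmem
    exact hs (norm_eq_zero.1 ((hβ s).trans (if_neg hmem)))

theorem sum_filter_norm_sq_of_norm_eq_ite {β : Form 𝕜 m} {𝓑 : Finset (Finset (Fin m))}
    (hβ : ∀ s, ‖β s‖ = if s ∈ 𝓑 then 1 else 0) (p : Finset (Fin m) → Prop) [DecidablePred p] :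
    ∑ s with p s, ‖β s‖ ^ 2 = (𝓑.filter p).card := by
  simp [hβ, Finset.filter_inter]

end Norm

section FormsOnV

variable {𝕜 : Type*} [NormedField 𝕜]

theorem onV_wedge {α β : Form 𝕜 8} (hα : onV α) (hβ : onV β) : onV (wedge α β) := fun u hu ↦
  Finset.sum_eq_zero fun s _ ↦ by
    by_cases hs : 0 ∈ s
    · simp [hα s hs]
    · simp [hβ (u \ s) (Finset.mem_sdiff.2 ⟨hu, hs⟩)]

theorem onV_iprod {β : Form 𝕜 8} (hβ : onV β) (v : Fin 8 → 𝕜) : onV (iprod v β) := fun t ht ↦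
  Finset.sum_eq_zero fun μ _ ↦ by simp [iprodB, hβ _ (Finset.mem_insert_of_mem ht)]

theorem onV_neg {β : Form 𝕜 8} (hβ : onV β) : onV (-β) := fun s hs ↦ by simp [hβ s hs]

theorem fnorm_wedge_e1_zero_add_sq {β γ : Form 𝕜 8} (hβ : onV β) (hγ : onV γ) :
    fnorm (wedge (e1 0) β + γ) ^ 2 = fnorm β ^ 2 + fnorm γ ^ 2 := by
  rw [fnorm_add_sq_of_disjoint_support, fnorm_wedge_e1 hβ]
  exact Set.disjoint_left.2 fun u hu hu' ↦
    hu (wedge_e1_apply_of_notMem (fun h0 ↦ hu' (hγ u h0)) β)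

theorem fnorm_wedge_e1_zero_sub_sq {β γ : Form 𝕜 8} (hβ : onV β) (hγ : onV γ) :
    fnorm (wedge (e1 0) β - γ) ^ 2 = fnorm β ^ 2 + fnorm γ ^ 2 := by
  rw [sub_eq_add_neg, fnorm_wedge_e1_zero_add_sq hβ (onV_neg hγ), fnorm_neg]

theorem sum_norm_sq_mul_of_onV {α : Form 𝕜 8} (h1 : isGrade 1 α) (hV : onV α) {N : Fin 8 → ℝ}
    {d : ℝ} (hN : ∀ μ ≠ 0, N μ = d) : ∑ μ, ‖α {μ}‖ ^ 2 * N μ = d * fnorm α ^ 2 := by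
  rw [fnorm_sq_of_isGrade_one h1, mul_comm, Finset.sum_mul]
  refine Finset.sum_congr rfl fun μ _ ↦ ?_
  rcases eq_or_ne μ 0 with rfl | hμ
  · simp [hV {0} (Finset.mem_singleton_self 0)]
  · rw [hN μ hμ]

end FormsOnV

section Fano

variable {𝕜 : Type*} [NormedField 𝕜]

/-- The monomials of `φ`: the lines of a Fano plane with points `1, …, 7`. -/
def fanoLines : Finset (Finset (Fin 8)) :=
  {{1, 2, 3}, {1, 4, 5}, {1, 6, 7}, {2, 4, 6}, {2, 5, 7}, {3, 4, 7}, {3, 5, 6}}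

/-- The monomials of `*₇φ`: the complements in `{1, …, 7}` of the Fano lines. -/
def fanoLineCompls : Finset (Finset (Fin 8)) :=
  fanoLines.image (Vset \ ·)

theorem norm_phi8 (s : Finset (Fin 8)) :
    ‖(phi8 s : 𝕜)‖ = if s ∈ fanoLines then 1 else 0 := by
  simp only [phi8, fanoLines, Finset.mem_insert, Finset.mem_singleton]
  split_ifs <;> simp_all

theorem fanoLineCompls_eq : fanoLineCompls =
    {{4, 5, 6, 7}, {2, 3, 6, 7}, {2, 3, 4, 5}, {1, 3, 5, 7}, {1, 3, 4, 6}, {1, 2, 5, 6},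
      {1, 2, 4, 7}} := by
  decide

theorem norm_psi8 (s : Finset (Fin 8)) :
    ‖(psi8 s : 𝕜)‖ = if s ∈ fanoLineCompls then 1 else 0 := by
  simp only [psi8, fanoLineCompls_eq, Finset.mem_insert, Finset.mem_singleton]
  split_ifs <;> simp_all

theorem pairwise_one_lt_card_sdiff_fanoLines :
    (fanoLines : Set (Finset (Fin 8))).Pairwise fun s t ↦ 1 < (s \ t).card := by
  have hcard : ∀ s ∈ fanoLines, ∀ t ∈ fanoLines, s ≠ t → 1 < (s \ t).card := by decide +kernel
  exact fun s hs t ht ↦ hcard s hs t ht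

theorem pairwise_one_lt_card_sdiff_fanoLineCompls :
    (fanoLineCompls : Set (Finset (Fin 8))).Pairwise fun s t ↦ 1 < (s \ t).card := by
  have hV : ∀ s ∈ fanoLines, s ⊆ Vset := by decide +kernel
  simp only [fanoLineCompls, Finset.coe_image]
  rintro _ ⟨s, hs, rfl⟩ _ ⟨t, ht, rfl⟩ hne
  have hsdiff : (Vset \ s) \ (Vset \ t) = t \ s := by grind
  rw [hsdiff]
  exact pairwise_one_lt_card_sdiff_fanoLines ht hs fun h ↦ hne (by rw [h])

theorem card_filter_mem_fanoLines : ∀ μ ≠ 0, (fanoLines.filter (μ ∈ ·)).card = 3 := by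
  decide

theorem card_filter_notMem_fanoLines : ∀ μ ≠ 0, (fanoLines.filter (μ ∉ ·)).card = 4 := by
  decide

theorem card_filter_mem_fanoLineCompls : ∀ μ ≠ 0, (fanoLineCompls.filter (μ ∈ ·)).card = 4 := by
  decide

theorem onV_phi8 : onV (phi8 : Form 𝕜 8) := by
  have hlines : ∀ s ∈ fanoLines, 0 ∉ s := by decide +kernel
  exact fun s hs ↦ norm_eq_zero.1 <| (norm_phi8 s).trans (if_neg fun h ↦ hlines s h hs)

theorem onV_psi8 : onV (psi8 : Form 𝕜 8) := by
  have hcompls : ∀ s ∈ fanoLineCompls, 0 ∉ s := by decide +kernel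
  exact fun s hs ↦ norm_eq_zero.1 <| (norm_psi8 s).trans (if_neg fun h ↦ hcompls s h hs)

theorem hasSeparatedSupport_phi8 : HasSeparatedSupport (phi8 : Form 𝕜 8) :=
  hasSeparatedSupport_of_norm_eq_ite norm_phi8 pairwise_one_lt_card_sdiff_fanoLines

theorem hasSeparatedSupport_psi8 : HasSeparatedSupport (psi8 : Form 𝕜 8) :=
  hasSeparatedSupport_of_norm_eq_ite norm_psi8 pairwise_one_lt_card_sdiff_fanoLineCompls

variable {α : Form 𝕜 8}

theorem fnorm_iprod_sharp1_phi8_sq (h1 : isGrade 1 α) (hV : onV α) :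
    fnorm (iprod (sharp1 α) phi8) ^ 2 = 3 * fnorm α ^ 2 := by
  rw [hasSeparatedSupport_phi8.fnorm_iprod_sq]
  refine sum_norm_sq_mul_of_onV h1 hV fun μ hμ ↦ ?_
  rw [sum_filter_norm_sq_of_norm_eq_ite norm_phi8, card_filter_mem_fanoLines μ hμ, Nat.cast_ofNat]

theorem fnorm_iprod_sharp1_psi8_sq (h1 : isGrade 1 α) (hV : onV α) :
    fnorm (iprod (sharp1 α) psi8) ^ 2 = 4 * fnorm α ^ 2 := by
  rw [hasSeparatedSupport_psi8.fnorm_iprod_sq]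
  refine sum_norm_sq_mul_of_onV h1 hV fun μ hμ ↦ ?_
  rw [sum_filter_norm_sq_of_norm_eq_ite norm_psi8, card_filter_mem_fanoLineCompls μ hμ,
    Nat.cast_ofNat]

theorem fnorm_wedge_phi8_sq (h1 : isGrade 1 α) (hV : onV α) :
    fnorm (wedge α phi8) ^ 2 = 4 * fnorm α ^ 2 := by
  rw [hasSeparatedSupport_phi8.fnorm_wedge_sq h1]
  refine sum_norm_sq_mul_of_onV h1 hV fun μ hμ ↦ ?_
  rw [sum_filter_norm_sq_of_norm_eq_ite norm_phi8, card_filter_notMem_fanoLines μ hμ,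
    Nat.cast_ofNat]

end Fano

theorem fnorm_lambda2 {α : Form K 8} (h1 : isGrade 1 α) (hV : onV α) :
    fnorm (lambda2 α) = fnorm α := by
  have hsum : fnorm (wedge (e1 0) α + iprod (sharp1 α) phi8) ^ 2 = 4 * fnorm α ^ 2 := by
    rw [fnorm_wedge_e1_zero_add_sq hV (onV_iprod onV_phi8 _), fnorm_iprod_sharp1_phi8_sq h1 hV]
    ring
  have hscalar : ‖(2 : K)⁻¹‖ = 2⁻¹ := by
    rw [← map_ofNat (algebraMap ℝ K) 2, norm_inv, norm_algebraMap', Real.norm_ofNat]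
  rw [← sq_eq_sq₀ (fnorm_nonneg _) (fnorm_nonneg _), lambda2, fnorm_smul, mul_pow, hsum, hscalar]
  ring

theorem fnorm_lambda4 {α : Form K 8} (h1 : isGrade 1 α) (hV : onV α) :
    fnorm (lambda4 α) = fnorm α := by
  have hdiff : fnorm (wedge (e1 0) (iprod (sharp1 α) psi8) - wedge α phi8) ^ 2 =
      8 * fnorm α ^ 2 := by
    rw [fnorm_wedge_e1_zero_sub_sq (onV_iprod onV_psi8 _) (onV_wedge hV onV_phi8),
      fnorm_iprod_sharp1_psi8_sq h1 hV, fnorm_wedge_phi8_sq h1 hV]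
    ring
  have hscalar : ‖(algebraMap ℝ K √8)⁻¹‖ ^ 2 = 8⁻¹ := by
    rw [norm_inv, norm_algebraMap', inv_pow, Real.norm_eq_abs, sq_abs, Real.sq_sqrt (by positivity)]
  rw [← sq_eq_sq₀ (fnorm_nonneg _) (fnorm_nonneg _), lambda4, fnorm_smul, mul_pow, hdiff, hscalar]
  ring

theorem statement3_general {K : Type*} [NormedField K] [NormedAlgebra ℝ K] (α : Form K 8)
    (h1 : isGrade 1 α) (hV : onV α) :
    fnorm (lambda2 α) = fnorm α ∧
    fnorm (lambda4 α) = fnorm α ∧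
    fnorm (lambda6 α) = fnorm α :=
  ⟨fnorm_lambda2 h1 hV, fnorm_lambda4 h1 hV, (fnorm_hstar _).trans (fnorm_lambda2 h1 hV)⟩

/-- Lemma 3.4.  For every `α ∈ V*` one has
`‖λ²(α)‖ = ‖α‖`, `‖λ⁴(α)‖ = ‖α‖` and `‖λ⁶(α)‖ = ‖α‖`; in particular `λ²`, `λ⁴`, `λ⁶`
are injective linear isometries on `V*`. -/
theorem statement3 (α : Form ℝ 8) (h1 : isGrade 1 α) (hV : onV α) :
    fnorm (lambda2 α) = fnorm α ∧
    fnorm (lambda4 α) = fnorm α ∧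
    fnorm (lambda6 α) = fnorm α :=
  statement3_general α h1 hV

end FMpaper
end
end

section
/- Let B ⊂ ℝ³ be open and f = (f⁴,…,f⁷): B → ℝ⁴ smooth, with graph tangent vectors v_j(x) and Fourier–Mukai curvature F_∇^S as in the context. Then the following are equivalent: (1) *₇φ(v₁(x),v₂(x),v₃(x),·) = 0 for every x ∈ B (i.e., the graph S is an associative submanifold with an appropriate orientation); (2) (F_∇^S)³/6 + F_∇^S ∧ *₇φ = 0 at every point of B; (3) (F_∇^S)³/6 + F_∇^S ∧ *₇φ = 0 and φ ∧ *₇((F_∇^S)²) = 0 at every point of B. -/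
open scoped BigOperators

noncomputable section

namespace FMpaper

variable {K : Type*} [NormedField K] [NormedAlgebra ℝ K]

variable {n : ℕ}

/-! Graph setting for coassociative `T⁴`-fibrations: `ℝ⁷ = ℝ³ × ℝ⁴` with coordinates
`(x¹,x²,x³,y⁴,…,y⁷)`. -/

/-- The index of the coordinate `x^j` (`j = 1,2,3` shifted to `0,1,2`) in `ℝ⁷`. -/
def xj (j : Fin 3) : Fin 7 := Fin.castAdd 4 j

/-- The index of the coordinate `y^a` (`a = 4,…,7` shifted to `0,…,3`) in `ℝ⁷`. -/
def ya (a : Fin 4) : Fin 7 := a.addNat 3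

/-- The spanning tangent vectors `v_j = ∂_j + Σ_a (∂f^a/∂x^j) ∂_a` of the graph of `f`. -/
def vA (f : (Fin 3 → ℝ) → (Fin 4 → ℝ)) (x : Fin 3 → ℝ) (j : Fin 3) : Fin 7 → ℝ :=
  Pi.single (xj j) 1 + ∑ a : Fin 4, pd f x j a • (Pi.single (ya a) 1 : Fin 7 → ℝ)

/-- The real 2-form `γ` with `F_∇^S = √-1 γ`, i.e. `γ = Σ_{j,a} (∂f^a/∂x^j) dx^j ∧ dy^a`. -/
def gammaA (f : (Fin 3 → ℝ) → (Fin 4 → ℝ)) (x : Fin 3 → ℝ) : Form ℝ 7 :=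
  ∑ j : Fin 3, ∑ a : Fin 4, pd f x j a • wedge (e1 (xj j)) (e1 (ya a))

/-- The `√-1 ℝ`-valued curvature 2-form
`F_∇^S = √-1 Σ_{j,a} (∂f^a/∂x^j) dx^j ∧ dy^a` of the real Fourier–Mukai transform. -/
def FSA (f : (Fin 3 → ℝ) → (Fin 4 → ℝ)) (x : Fin 3 → ℝ) : Form ℂ 7 :=
  fun s => Complex.I * (gammaA f x s : ℂ)

/-!
Write `φ = dx¹²³ + Σ_j dx^j ∧ ω_j` and let `A_j ∈ ℝ⁴` be the rows of the Jacobian matrix of `f`.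
Both `*φ(v₁, v₂, v₃, ·)` and `F³/6 + F ∧ *φ` are encoded by the same vector of `ℝ⁴`, the associator:
the sum of a linear part `Σ_j ω_j A_j` and the triple cross product of the `A_j`. The identity
`√-1 ^ 3 = -√-1` makes the relative sign of the cubic and the linear part agree in both.

The coefficients of `φ ∧ *(F²)` are the numbers `Σ_k ⟨A_j, ω_k A_k⟩`, up to a factor. The triple
cross product is orthogonal to every `A_j`, so these numbers are the inner products of the `A_j`
with the associator, and they vanish as soon as it does.
-/

section ExteriorAlgebra

variable {𝕜 : Type*} [NormedField 𝕜]

theorem wedge_single_left (s : Finset (Fin n)) (c : 𝕜) (β : Form 𝕜 n) (u : Finset (Fin n)) :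
    wedge (Pi.single s c) β u = if s ⊆ u then signMerge s (u \ s) * c * β (u \ s) else 0 := by
  simp [wedge, Pi.single_apply]

theorem wedge_sum_left {ι : Type*} (I : Finset ι) (α : ι → Form 𝕜 n) (β : Form 𝕜 n) :
    wedge (∑ i ∈ I, α i) β = ∑ i ∈ I, wedge (α i) β := by
  ext u
  simp only [wedge, Finset.sum_apply, Finset.mul_sum, Finset.sum_mul]
  exact Finset.sum_comm

theorem e1_eq_single (i : Fin n) : (e1 i : Form 𝕜 n) = Pi.single {i} 1 := by
  ext s
  simp [e1, Pi.single_apply]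

theorem wedge_e1_e1 {i k : Fin n} (hik : i < k) :
    wedge (e1 i) (e1 k) = (Pi.single {i, k} 1 : Form 𝕜 n) := by
  ext u
  have sdiff_eq : i ∈ u ∧ u \ {i} = {k} ↔ u = {i, k} := by grind
  have sign_eq : signMerge {i} {k} = (1 : 𝕜) := by
    simp [signMerge, Finset.filter_singleton, hik.not_gt]
  simp only [e1_eq_single, wedge_single_left, Finset.singleton_subset_iff, Pi.single_apply,
    ← sdiff_eq]
  split_ifs with hi hk <;> grind

theorem hstar_add (α β : Form 𝕜 n) : hstar (α + β) = hstar α + hstar β := by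
  ext t
  exact mul_add _ _ _

theorem hstar_single (s : Finset (Fin n)) (c : 𝕜) :
    hstar (Pi.single s c) = Pi.single sᶜ (signMerge s sᶜ * c) := by
  ext t
  obtain rfl | ht := eq_or_ne t sᶜ
  · simp [hstar]
  · simp [hstar, Pi.single_eq_of_ne ht, Pi.single_eq_of_ne (mt compl_eq_comm.mp ht.symm)]

theorem evalForm_add {k : ℕ} (α β : Form 𝕜 n) (v : Fin k → Fin n → 𝕜) :
    evalForm (α + β) v = evalForm α v + evalForm β v := by
  simp only [evalForm, Pi.add_apply, add_mul, Finset.sum_add_distrib]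

theorem evalForm_single_image {k : ℕ} {g : Fin k → Fin n} (hg : StrictMono g) (c : 𝕜)
    (v : Fin k → Fin n → 𝕜) :
    evalForm (Pi.single (Finset.univ.image g) c) v =
      c * (Matrix.of fun i j => v i (g j)).det := by
  have hcard : (Finset.univ.image g).card = k := by
    simp [Finset.card_image_of_injective _ hg.injective]
  have hg_eq := Finset.orderEmbOfFin_unique hcard
    (fun j => Finset.mem_image_of_mem g (Finset.mem_univ j)) hg
  rw [evalForm, Fintype.sum_eq_single (Finset.univ.image g)
    fun s hs => by rw [Pi.single_eq_of_ne hs, zero_mul], Pi.single_eq_same, dif_pos hcard]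
  simp only [Finset.coe_orderIsoOfFin_apply, ← congrFun hg_eq]

theorem signMerge_insert {i : Fin n} {s : Finset (Fin n)} (hi : i ∉ s) (t : Finset (Fin n)) :
    (signMerge (insert i s) t : 𝕜) = (-1) ^ (t.filter (· < i)).card * signMerge s t := by
  have card_eq : (((insert i s) ×ˢ t).filter fun p => p.2 < p.1).card =
      (t.filter (· < i)).card + ((s ×ˢ t).filter fun p => p.2 < p.1).card := by
    simp only [Finset.card_filter, Finset.sum_product, Finset.sum_insert hi]
  rw [signMerge, signMerge, card_eq, pow_add]

theorem signMerge_mul_self (s t : Finset (Fin n)) : signMerge s t * signMerge s t = (1 : 𝕜) := by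
  rw [signMerge, ← mul_pow, neg_one_mul, neg_neg, one_pow]

theorem signMerge_mul_signMerge_compl {i : Fin n} {s t : Finset (Fin n)} (hi : i ∉ s)
    (hst : insert i s = tᶜ) :
    signMerge s t * signMerge tᶜ t = (-1 : 𝕜) ^ (i : ℕ) * (-1) ^ (s.filter (· < i)).card := by
  have card_below : (t.filter (· < i)).card + (s.filter (· < i)).card = i := by
    have mem_iff (k : Fin n) : k = i ∨ k ∈ s ↔ k ∉ t := by
      rw [← Finset.mem_insert, hst, Finset.mem_compl]
    have below_eq : t.filter (· < i) ∪ s.filter (· < i) = Finset.Iio i := by grind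
    have disj : Disjoint (t.filter (· < i)) (s.filter (· < i)) := by
      grind [Finset.disjoint_left]
    rw [← Finset.card_union_of_disjoint disj, below_eq, Fin.card_Iio]
  rw [← hst, signMerge_insert hi, mul_left_comm, signMerge_mul_self, mul_one, ← card_below, pow_add,
    mul_assoc, ← mul_pow, neg_one_mul, neg_neg, one_pow, mul_one]

theorem wedge_hstar_compl_singleton (α β : Form 𝕜 n) (i : Fin n) :
    wedge α (hstar β) {i}ᶜ = (-1) ^ (i : ℕ) * inner' α (iprodB i β) := by
  have summand_eq (s : Finset (Fin n)) (hs : i ∉ s) :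
      signMerge s ({i}ᶜ \ s) * α s * hstar β ({i}ᶜ \ s) =
        (-1) ^ (i : ℕ) * (α s * iprodB i β s) := by
    have insert_eq : insert i s = ({i}ᶜ \ s)ᶜ := by grind [Finset.mem_compl]
    have sign_eq := signMerge_mul_signMerge_compl (𝕜 := 𝕜) hs insert_eq
    rw [hstar, iprodB, if_neg hs, insert_eq]
    linear_combination α s * β ({i}ᶜ \ s)ᶜ * sign_eq
  rw [inner', Finset.mul_sum, wedge]
  refine Finset.sum_subset_zero_on_sdiff (Finset.subset_univ _) (fun s hs => ?_) fun s hs => ?_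
  · rw [iprodB, if_pos (by simpa [Finset.subset_compl_singleton] using hs), mul_zero, mul_zero]
  · exact summand_eq s (by simpa [Finset.subset_compl_singleton] using hs)

/-- The subspace of forms that are homogeneous of weight `m` for the grading of the exterior
algebra in which the basis covector `e^i` has weight `w i`. -/
def weightSubmodule (𝕜 : Type*) [NormedField 𝕜] {M : Type*} [AddCommMonoid M] (w : Fin n → M)
    (m : M) : Submodule 𝕜 (Form 𝕜 n) where
  carrier := {α | ∀ s, ∑ i ∈ s, w i ≠ m → α s = 0}
  add_mem' hα hβ s hs := by simp [hα s hs, hβ s hs]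
  zero_mem' _ _ := rfl
  smul_mem' c α hα s hs := by simp [hα s hs]

section Weight

variable {M : Type*} [AddCommMonoid M] {w : Fin n → M} {m m' : M} {α β : Form 𝕜 n}

theorem single_mem_weightSubmodule {s : Finset (Fin n)} (hs : ∑ i ∈ s, w i = m) (c : 𝕜) :
    Pi.single s c ∈ weightSubmodule 𝕜 w m := by
  intro t ht
  have hts : t ≠ s := by
    rintro rfl
    exact ht hs
  rw [Pi.single_eq_of_ne hts]

theorem wedge_mem_weightSubmodule (hα : α ∈ weightSubmodule 𝕜 w m)
    (hβ : β ∈ weightSubmodule 𝕜 w m') : wedge α β ∈ weightSubmodule 𝕜 w (m + m') := by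
  intro u hu
  refine Finset.sum_eq_zero fun s hs => ?_
  by_cases hsm : ∑ i ∈ s, w i = m
  · have : ∑ i ∈ u \ s, w i ≠ m' := by
      rintro rfl
      exact hu (by rw [← hsm, add_comm, Finset.sum_sdiff (Finset.mem_powerset.mp hs)])
    rw [hβ _ this, mul_zero]
  · rw [hα s hsm, mul_zero, zero_mul]

theorem eq_zero_iff_of_mem_weightSubmodule {κ : Type*} {σ : κ → Finset (Fin n)}
    (hσ : ∀ s, ∑ i ∈ s, w i = m → ∃ k, s = σ k) (hα : α ∈ weightSubmodule 𝕜 w m) :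
    α = 0 ↔ ∀ k, α (σ k) = 0 := by
  refine ⟨fun h k => congrFun h _, fun h => funext fun s => ?_⟩
  by_cases hs : ∑ i ∈ s, w i = m
  · obtain ⟨k, rfl⟩ := hσ s hs
    exact h k
  · exact hα s hs

theorem hstar_mem_weightSubmodule [IsRightCancelAdd M] (hα : α ∈ weightSubmodule 𝕜 w m)
    (hm : m' + m = ∑ i, w i) : hstar α ∈ weightSubmodule 𝕜 w m' := by
  intro t ht
  have : ∑ i ∈ tᶜ, w i ≠ m := by
    rintro rfl
    exact ht (add_right_cancel (hm.trans (Finset.sum_add_sum_compl t w).symm)).symm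
  rw [hstar, hα _ this, mul_zero]

end Weight

end ExteriorAlgebra

theorem sum_alternating_mul_minor {R : Type*} [CommRing R] {m : ℕ}
    (A : Matrix (Fin m) (Fin (m + 1)) R) (j : Fin m) :
    ∑ a, A j a * ((-1) ^ (a : ℕ) * (A.submatrix id a.succAbove).det) = 0 := by
  have hdet : (Matrix.of (Matrix.vecCons (A j) A)).det = 0 :=
    Matrix.det_zero_of_row_eq (Fin.succ_ne_zero j).symm rfl
  rw [Matrix.det_succ_row_zero] at hdet
  rw [← hdet]
  refine Finset.sum_congr rfl fun a _ => ?_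
  rw [← mul_assoc, mul_comm (A j a)]
  rfl

section Coordinates

/-- The indices of the coordinates `x^j`, `j ∈ J`, and `y^a`, `a ∈ A`, so that
`e^(coordSet J A) = dx^J ∧ dy^A`. -/
def coordSet (J : Finset (Fin 3)) (A : Finset (Fin 4)) : Finset (Fin 7) :=
  J.image xj ∪ A.image ya

variable {J : Finset (Fin 3)} {A : Finset (Fin 4)} {j : Fin 3} {a : Fin 4}

theorem xj_lt_ya (j : Fin 3) (a : Fin 4) : xj j < ya a := by
  decide +revert

theorem xj_mem_coordSet : xj j ∈ coordSet J A ↔ j ∈ J := by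
  have xj_injective : Function.Injective xj := Fin.castAdd_injective 3 4
  simp [coordSet, xj_injective.eq_iff, (xj_lt_ya _ _).ne']

theorem ya_mem_coordSet : ya a ∈ coordSet J A ↔ a ∈ A := by
  have ya_injective : Function.Injective ya := (Fin.addNatEmb 3).injective
  simp [coordSet, ya_injective.eq_iff, (xj_lt_ya _ _).ne]

theorem coordSet_sdiff_pair (j : Fin 3) (a : Fin 4) :
    coordSet J A \ {xj j, ya a} = coordSet (J.erase j) (A.erase a) := by
  revert J A j a
  decide +kernel

theorem card_filter_lt_xj : ((coordSet J A).filter (· < xj j)).card = (J.filter (· < j)).card := by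
  revert J A j
  decide +kernel

theorem card_filter_lt_ya :
    ((coordSet J A).filter (· < ya a)).card = J.card + (A.filter (· < a)).card := by
  revert J A a
  decide +kernel

end Coordinates

section MixedForm

variable {𝕜 : Type*} [NormedField 𝕜]

/-- The 2-form `Σ_{j,a} c_{ja} dx^j ∧ dy^a`; for `c = √-1 (∂f^a/∂x^j)` it is the curvature. -/
def mixedForm (c : Matrix (Fin 3) (Fin 4) 𝕜) : Form 𝕜 7 :=
  ∑ j, ∑ a, Pi.single {xj j, ya a} (c j a)

variable (c : Matrix (Fin 3) (Fin 4) 𝕜)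

theorem mixedForm_coordSet_singleton (j : Fin 3) (a : Fin 4) :
    mixedForm c (coordSet {j} {a}) = c j a := by
  have pair_eq_iff : ∀ k b, coordSet {j} {a} = {xj k, ya b} ↔ j = k ∧ a = b := by
    decide +revert
  simp [mixedForm, Pi.single_apply, pair_eq_iff, ite_and]

theorem inner'_mixedForm (β : Form 𝕜 7) :
    inner' (mixedForm c) β = ∑ j, ∑ a, c j a * β {xj j, ya a} := by
  simp only [inner', mixedForm, Finset.sum_apply, Finset.sum_mul]
  rw [Finset.sum_comm]
  refine Finset.sum_congr rfl fun j _ => ?_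
  rw [Finset.sum_comm]
  simp [Pi.single_apply]

theorem wedge_mixedForm_coordSet (β : Form 𝕜 7) (J : Finset (Fin 3)) (A : Finset (Fin 4)) :
    wedge (mixedForm c) β (coordSet J A) = ∑ j ∈ J, ∑ a ∈ A,
      (-1) ^ ((J.filter (· < j)).card + (J.erase j).card + (A.filter (· < a)).card) *
        (c j a * β (coordSet (J.erase j) (A.erase a))) := by
  have sign_eq (j : Fin 3) (a : Fin 4) :
      (signMerge {xj j, ya a} (coordSet (J.erase j) (A.erase a)) : 𝕜) =
        (-1) ^ ((J.filter (· < j)).card + (J.erase j).card + (A.filter (· < a)).card) := by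
    have sign_singleton (t : Finset (Fin 7)) :
        (signMerge {ya a} t : 𝕜) = (-1) ^ (t.filter (· < ya a)).card := by
      rw [← insert_empty_eq, signMerge_insert (Finset.notMem_empty _)]
      simp [signMerge]
    rw [signMerge_insert (by simp [(xj_lt_ya j a).ne]), sign_singleton, card_filter_lt_xj,
      card_filter_lt_ya, ← pow_add, ← add_assoc]
    simp only [Finset.filter_erase, Finset.mem_filter, lt_irrefl, and_false, not_false_eq_true,
      Finset.erase_eq_of_notMem]
  have subset_iff (j : Fin 3) (a : Fin 4) : {xj j, ya a} ⊆ coordSet J A ↔ j ∈ J ∧ a ∈ A := by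
    rw [Finset.insert_subset_iff, Finset.singleton_subset_iff, xj_mem_coordSet, ya_mem_coordSet]
  simp only [mixedForm, wedge_sum_left, Finset.sum_apply, wedge_single_left, subset_iff, ite_and,
    coordSet_sdiff_pair, sign_eq, mul_assoc]
  simp only [Finset.sum_ite_irrel, Finset.sum_const_zero, Finset.sum_ite_mem, Finset.univ_inter]

theorem wedge_mixedForm_self {j k : Fin 3} {a b : Fin 4} (hjk : j < k) (hab : a < b) :
    wedge (mixedForm c) (mixedForm c) (coordSet {j, k} {a, b}) =
      -2 * (c j a * c k b - c j b * c k a) := by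
  have erase_pair {ι : Type} [DecidableEq ι] {p q : ι} (hpq : p ≠ q) :
      Finset.erase {p, q} p = {q} ∧ Finset.erase {p, q} q = {p} := by grind
  rw [wedge_mixedForm_coordSet, Finset.sum_pair hjk.ne, Finset.sum_pair hab.ne,
    Finset.sum_pair hab.ne]
  simp only [erase_pair hjk.ne, erase_pair hab.ne, mixedForm_coordSet_singleton]
  simp only [Finset.filter_insert, Finset.filter_singleton, hjk, hjk.not_gt, hab, hab.not_gt,
    lt_self_iff_false, ↓reduceIte, Finset.card_empty, Finset.card_singleton, insert_empty_eq,
    zero_add, add_zero, Nat.reduceAdd, pow_one, even_two, Even.neg_pow, one_pow, one_mul, neg_mul]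
  ring

theorem wedge_mixedForm_cube (a : Fin 4) :
    wedge (mixedForm c) (wedge (mixedForm c) (mixedForm c)) {ya a}ᶜ =
      -6 * (c.submatrix id a.succAbove).det := by
  have compl_ya : {ya a}ᶜ = coordSet Finset.univ {a}ᶜ := by decide +revert
  have sign_eq (j b : Fin 3) :
      (Finset.univ.filter (· < j)).card + (Finset.univ.erase j).card +
        (Finset.filter (· < a.succAbove b) {a}ᶜ).card = j + b + 2 := by decide +revert
  have minor (j b : Fin 3) :
      wedge (mixedForm c) (mixedForm c)
          (coordSet (Finset.univ.erase j) (Finset.erase {a}ᶜ (a.succAbove b))) =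
        -2 * ((c.submatrix id a.succAbove).submatrix j.succAbove b.succAbove).det := by
    have rows : Finset.univ.erase j = {j.succAbove 0, j.succAbove 1} := by decide +revert
    have cols : Finset.erase {a}ᶜ (a.succAbove b) =
        {a.succAbove (b.succAbove 0), a.succAbove (b.succAbove 1)} := by decide +revert
    rw [rows, cols, wedge_mixedForm_self c (by simp) (by simp), Matrix.det_fin_two]
    rfl
  have row_expansion (j : Fin 3) :
      ∑ b ∈ {a}ᶜ, (-1) ^ ((Finset.univ.filter (· < j)).card + (Finset.univ.erase j).card +
          (Finset.filter (· < b) {a}ᶜ).card) *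
        (c j b * wedge (mixedForm c) (mixedForm c)
          (coordSet (Finset.univ.erase j) (Finset.erase {a}ᶜ b))) =
        -2 * (c.submatrix id a.succAbove).det := by
    rw [← Fin.image_succAbove_univ, Finset.sum_image a.succAbove_right_injective.injOn,
      Fin.image_succAbove_univ, Matrix.det_succ_row _ j, Finset.mul_sum]
    refine Finset.sum_congr rfl fun b _ => ?_
    rw [minor, sign_eq, Matrix.submatrix_apply, id, pow_add]
    ring
  rw [compl_ya, wedge_mixedForm_coordSet, Finset.sum_congr rfl fun j _ => row_expansion j]
  norm_num [← mul_assoc]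

theorem iprodB_xj_coordSet (α : Form 𝕜 7) (j : Fin 3) (J : Finset (Fin 3)) (A : Finset (Fin 4)) :
    iprodB (xj j) α (coordSet J A) = if j ∈ J then 0 else
      (-1) ^ (J.filter (· < j)).card * α (coordSet (insert j J) A) := by
  have insert_eq : insert (xj j) (coordSet J A) = coordSet (insert j J) A := by
    simp [coordSet, Finset.image_insert, Finset.insert_union]
  simp only [iprodB, xj_mem_coordSet, card_filter_lt_xj, insert_eq]

theorem iprodB_wedge_mixedForm_self (j k : Fin 3) {a b : Fin 4} (hab : a < b) :
    iprodB (xj j) (wedge (mixedForm c) (mixedForm c)) (coordSet {k} {a, b}) =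
      -2 * (c j a * c k b - c j b * c k a) := by
  rw [iprodB_xj_coordSet]
  obtain hjk | rfl | hkj := lt_trichotomy j k
  · rw [if_neg (by simpa using hjk.ne), wedge_mixedForm_self c hjk hab]
    simp [Finset.filter_singleton, hjk.not_gt]
  · rw [if_pos (Finset.mem_singleton_self j)]
    ring
  · rw [if_neg (by simpa using hkj.ne'), Finset.pair_comm, wedge_mixedForm_self c hkj hab]
    simp only [Finset.filter_singleton, hkj, if_true, Finset.card_singleton]
    ring

end MixedForm

section Associator

open scoped Matrix

variable {R : Type*} [CommRing R]

theorem sum_sum_Ioi_mul_sub_of_skew {ι : Type*} [Fintype ι] [LinearOrder ι]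
    [LocallyFiniteOrderTop ι] [LocallyFiniteOrderBot ι] {M : Matrix ι ι R} (hM : Mᵀ = -M)
    (hdiag : ∀ a, M a a = 0) (v w : ι → R) :
    ∑ a, ∑ b ∈ Finset.Ioi a, M a b * (v a * w b - v b * w a) = v ⬝ᵥ M *ᵥ w := by
  have skew (a b : ι) : M b a = -M a b := congrFun (congrFun hM a) b
  calc ∑ a, ∑ b ∈ Finset.Ioi a, M a b * (v a * w b - v b * w a)
      = ∑ a, ∑ b ∈ Finset.Ioi a, (v b * M b a * w a + v a * M a b * w b) := by
        refine Finset.sum_congr rfl fun a _ => Finset.sum_congr rfl fun b _ => ?_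
        rw [skew a b]
        ring
    _ = ∑ a, ∑ b ∈ {a}ᶜ, v b * M b a * w a :=
        Finset.sum_sum_Ioi_add_eq_sum_sum_off_diag fun b a => v b * M b a * w a
    _ = ∑ a, ∑ b, v b * M b a * w a := by
        refine Finset.sum_congr rfl fun a _ => ?_
        rw [Fintype.sum_eq_add_sum_compl a, hdiag, mul_zero, zero_mul, zero_add]
    _ = v ⬝ᵥ M *ᵥ w := by
        rw [Finset.sum_comm]
        simp only [dotProduct, Matrix.mulVec, Finset.mul_sum, mul_assoc]

/-- The triple `ω₀, ω₁, ω₂` of 2-forms on `ℝ⁴`, as skew-symmetric matrices, for which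
`φ = dx¹²³ + Σ_j dx^j ∧ ω_j`. -/
def omega : Fin 3 → Matrix (Fin 4) (Fin 4) R :=
  ![!![0, 1, 0, 0; -1, 0, 0, 0; 0, 0, 0, 1; 0, 0, -1, 0],
    !![0, 0, 1, 0; 0, 0, 0, -1; -1, 0, 0, 0; 0, 1, 0, 0],
    !![0, 0, 0, -1; 0, 0, -1, 0; 0, 1, 0, 0; 1, 0, 0, 0]]

theorem transpose_omega (j : Fin 3) : (omega j)ᵀ = -(omega j : Matrix (Fin 4) (Fin 4) R) := by
  ext a b
  fin_cases j <;> fin_cases a <;> fin_cases b <;> simp [omega]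

theorem omega_apply_self (j : Fin 3) (a : Fin 4) : (omega j a a : R) = 0 := by
  fin_cases j <;> fin_cases a <;> rfl

/-- The `ℝ⁴`-component of the vector-valued form `*φ(v₀, v₁, v₂, ·)` on the graph of a linear map
with Jacobian matrix `A` (up to sign): the sum of the linear Dirac-type expression `Σ_j ω_j A_j`
and the triple cross product of the rows of `A`. -/
def associator (A : Matrix (Fin 3) (Fin 4) R) (a : Fin 4) : R :=
  ∑ j, (omega j *ᵥ A j) a + (-1) ^ (a : ℕ) * (A.submatrix id a.succAbove).det

theorem map_associator {S : Type*} [CommRing S] (f : R →+* S) (A : Matrix (Fin 3) (Fin 4) R)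
    (a : Fin 4) : f (associator A a) = associator (A.map f) a := by
  have map_omega (j : Fin 3) (b : Fin 4) : f (omega j a b) = omega j a b := by
    fin_cases j <;> fin_cases a <;> fin_cases b <;> simp [omega]
  simp [associator, Matrix.mulVec, dotProduct, map_omega, RingHom.map_det, Matrix.submatrix_map]

theorem dotProduct_associator (A : Matrix (Fin 3) (Fin 4) R) (j : Fin 3) :
    A j ⬝ᵥ associator A = ∑ k, A j ⬝ᵥ omega k *ᵥ A k := by
  simp only [dotProduct, associator, mul_add, Finset.sum_add_distrib, sum_alternating_mul_minor,
    add_zero, Finset.mul_sum]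
  exact Finset.sum_comm

theorem smul_dotProduct_associator_smul (c : R) (A : Matrix (Fin 3) (Fin 4) R) (j : Fin 3) :
    (c • A) j ⬝ᵥ associator (c • A) = c ^ 2 * (A j ⬝ᵥ associator A) := by
  have smul_apply_row (k : Fin 3) : (c • A) k = c • A k := rfl
  simp only [dotProduct_associator, Finset.mul_sum]
  refine Finset.sum_congr rfl fun k _ => ?_
  rw [smul_apply_row, smul_apply_row, Matrix.mulVec_smul, smul_dotProduct, dotProduct_smul,
    smul_eq_mul, smul_eq_mul, sq, mul_assoc]

end Associator

section G2

open scoped Matrix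

variable {𝕜 : Type*} [NormedField 𝕜]

theorem phi7_eq_add_single : (phi7 : Form 𝕜 7) = Pi.single {0, 1, 2} 1 + Pi.single {0, 3, 4} 1 +
    Pi.single {0, 5, 6} 1 + Pi.single {1, 3, 5} 1 + Pi.single {1, 4, 6} (-1) +
    Pi.single {2, 3, 6} (-1) + Pi.single {2, 4, 5} (-1) := by
  funext s
  unfold phi7
  split_ifs with h h h h h h h
  all_goals first | subst h; simp +decide | simp [*]

theorem psi7_eq_add_single : (psi7 : Form 𝕜 7) = Pi.single {3, 4, 5, 6} 1 +
    Pi.single {1, 2, 5, 6} 1 + Pi.single {1, 2, 3, 4} 1 + Pi.single {0, 2, 4, 6} 1 +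
    Pi.single {0, 2, 3, 5} (-1) + Pi.single {0, 1, 4, 5} (-1) + Pi.single {0, 1, 3, 6} (-1) := by
  funext s
  unfold psi7
  split_ifs with h h h h h h h
  all_goals first | subst h; simp +decide | simp [*]

theorem hstar_phi7 : hstar phi7 = (psi7 : Form 𝕜 7) := by
  have hstar_single_of_even {s t : Finset (Fin 7)} (c : 𝕜) (hst : sᶜ = t)
      (heven : Even ((s ×ˢ t).filter fun p => p.2 < p.1).card) :
      hstar (Pi.single s c) = Pi.single t c := by
    rw [hstar_single, hst, signMerge, heven.neg_one_pow, one_mul]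
  simp only [phi7_eq_add_single, psi7_eq_add_single, hstar_add]
  congr <;> exact hstar_single_of_even _ (by decide +kernel) (by decide +kernel)

theorem iprodB_ya_phi7 (a b : Fin 4) (j : Fin 3) :
    iprodB (ya a) phi7 {xj j, ya b} = -(omega j a b : 𝕜) := by
  fin_cases j <;> fin_cases a <;> fin_cases b <;>
    simp +decide [iprodB, phi7, omega]

theorem wedge_mixedForm_psi7 (c : Matrix (Fin 3) (Fin 4) 𝕜) (a : Fin 4) :
    wedge (mixedForm c) psi7 {ya a}ᶜ = (-1) ^ (a : ℕ) * ∑ j, (omega j *ᵥ c j) a := by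
  have contract : inner' (mixedForm c) (iprodB (ya a) phi7) = -∑ j, (omega j *ᵥ c j) a := by
    simp only [inner'_mixedForm, iprodB_ya_phi7, mul_comm (c _ _), neg_mul, Matrix.mulVec,
      dotProduct, Finset.sum_neg_distrib]
  have sign_eq : (-1 : 𝕜) ^ (ya a : ℕ) = -(-1) ^ (a : ℕ) := by
    simp [ya, pow_succ]
  rw [← hstar_phi7, wedge_hstar_compl_singleton, contract, sign_eq, neg_mul_neg]

theorem inner'_phi7 (β : Form 𝕜 7) : inner' phi7 β = β (coordSet Finset.univ ∅) +
    ∑ j, ∑ a, ∑ b ∈ Finset.Ioi a, omega j a b * β (coordSet {j} {a, b}) := by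
  have Ioi_eq : Finset.Ioi (0 : Fin 4) = {1, 2, 3} ∧ Finset.Ioi (1 : Fin 4) = {2, 3} ∧
      Finset.Ioi (2 : Fin 4) = {3} ∧ Finset.Ioi (3 : Fin 4) = ∅ := by decide
  have coordSet_univ : coordSet Finset.univ ∅ = {0, 1, 2} := by decide
  have coordSet_pair (j : Fin 3) (a b : Fin 4) : coordSet {j} {a, b} = {xj j, ya a, ya b} := by
    decide +revert
  simp only [inner', phi7_eq_add_single, omega, coordSet_univ, coordSet_pair, xj, ya, Ioi_eq,
    Pi.add_apply, Pi.single_apply, add_mul, ite_mul, one_mul, zero_mul, neg_mul,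
    Finset.sum_add_distrib, Finset.sum_ite_eq', Finset.mem_univ, ↓reduceIte, Fin.sum_univ_three,
    Fin.sum_univ_four, Fin.isValue, Fin.reduceAddNat, Fin.reduceCastAdd, Fin.reduceEq,
    Finset.mem_insert, Finset.mem_singleton, or_self, not_false_eq_true, Finset.sum_insert,
    Finset.sum_singleton, Finset.sum_empty, add_zero, zero_add, Matrix.of_apply, Matrix.cons_val,
    Matrix.cons_val', Matrix.cons_val_zero, Matrix.cons_val_one, Matrix.cons_val_fin_one]
  ring

theorem wedge_phi7_hstar_wedge_self (c : Matrix (Fin 3) (Fin 4) 𝕜) (j : Fin 3) :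
    wedge phi7 (hstar (wedge (mixedForm c) (mixedForm c))) {xj j}ᶜ =
      (-1) ^ (j : ℕ) * (-2 * (c j ⬝ᵥ associator c)) := by
  have contract (k : Fin 3) : ∑ a, ∑ b ∈ Finset.Ioi a, omega k a b *
      iprodB (xj j) (wedge (mixedForm c) (mixedForm c)) (coordSet {k} {a, b}) =
        -2 * (c j ⬝ᵥ omega k *ᵥ c k) := by
    rw [← sum_sum_Ioi_mul_sub_of_skew (transpose_omega k) (omega_apply_self k)]
    simp only [Finset.mul_sum]
    refine Finset.sum_congr rfl fun a _ => Finset.sum_congr rfl fun b hb => ?_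
    rw [iprodB_wedge_mixedForm_self c j k (Finset.mem_Ioi.mp hb), mul_left_comm]
  rw [wedge_hstar_compl_singleton, inner'_phi7, iprodB_xj_coordSet, if_pos (Finset.mem_univ j),
    zero_add, Finset.sum_congr rfl fun k _ => contract k, ← Finset.mul_sum, dotProduct_associator]
  rfl

end G2

section Curvature

open scoped Matrix

variable {𝕜 : Type*} [NormedField 𝕜]

/-- The grading of the exterior algebra of `(ℝ⁷)*` by the degree and by the parity of the number of
factors `dx^j`. The forms in the theorem are homogeneous for it, which singles out the coefficients
that can be nonzero. -/
def degreeParity (i : Fin 7) : ℕ × ZMod 2 :=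
  (1, if i < 3 then 1 else 0)

theorem mixedForm_mem_weightSubmodule (c : Matrix (Fin 3) (Fin 4) 𝕜) :
    mixedForm c ∈ weightSubmodule 𝕜 degreeParity (2, 1) := by
  refine Submodule.sum_mem _ fun j _ => Submodule.sum_mem _ fun a _ => ?_
  exact single_mem_weightSubmodule (by decide +revert) _

theorem phi7_mem_weightSubmodule : (phi7 : Form 𝕜 7) ∈ weightSubmodule 𝕜 degreeParity (3, 1) := by
  rw [phi7_eq_add_single]
  repeat' refine Submodule.add_mem _ ?_ ?_
  all_goals exact single_mem_weightSubmodule (by decide) _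

theorem psi7_mem_weightSubmodule : (psi7 : Form 𝕜 7) ∈ weightSubmodule 𝕜 degreeParity (4, 0) := by
  rw [← hstar_phi7]
  exact hstar_mem_weightSubmodule phi7_mem_weightSubmodule (by decide)

theorem eq_compl_ya_of_sum_degreeParity :
    ∀ s : Finset (Fin 7), ∑ i ∈ s, degreeParity i = (6, 1) → ∃ a, s = {ya a}ᶜ := by
  decide +kernel

theorem eq_compl_xj_of_sum_degreeParity :
    ∀ s : Finset (Fin 7), ∑ i ∈ s, degreeParity i = (6, 0) → ∃ j, s = {xj j}ᶜ := by
  decide +kernel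

variable {ι : 𝕜} (A : Matrix (Fin 3) (Fin 4) 𝕜)

theorem cube_add_wedge_psi7_apply [CharZero 𝕜] (hι : ι ^ 2 = -1) (a : Fin 4) :
    ((6 : 𝕜)⁻¹ • wedge (mixedForm (ι • A)) (wedge (mixedForm (ι • A)) (mixedForm (ι • A))) +
      wedge (mixedForm (ι • A)) psi7) {ya a}ᶜ = ι * ((-1) ^ (a : ℕ) * associator A a) := by
  have det_eq : ((ι • A).submatrix id a.succAbove).det =
      -ι * (A.submatrix id a.succAbove).det := by
    rw [Matrix.submatrix_smul, Pi.smul_apply, Pi.smul_apply, Matrix.det_smul, Fintype.card_fin]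
    linear_combination ι * (A.submatrix id a.succAbove).det * hι
  have smul_apply_row (j : Fin 3) : (ι • A) j = ι • A j := rfl
  have linear_eq : ∑ j, (omega j *ᵥ (ι • A j)) a = ι * ∑ j, (omega j *ᵥ A j) a := by
    simp only [Pi.smul_apply, Matrix.mulVec_smul, smul_eq_mul, Finset.mul_sum]
  have sign_sq : ((-1 : 𝕜) ^ (a : ℕ)) ^ 2 = 1 := by
    rw [← pow_mul', pow_mul, neg_one_sq, one_pow]
  rw [Pi.add_apply, Pi.smul_apply, wedge_mixedForm_cube, wedge_mixedForm_psi7, det_eq]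
  simp only [smul_apply_row, linear_eq, associator, smul_eq_mul]
  field_simp
  linear_combination -ι * (A.submatrix id a.succAbove).det * sign_sq

theorem cube_add_wedge_psi7_eq_zero_iff [CharZero 𝕜] (hι : ι ^ 2 = -1) :
    (6 : 𝕜)⁻¹ • wedge (mixedForm (ι • A)) (wedge (mixedForm (ι • A)) (mixedForm (ι • A))) +
      wedge (mixedForm (ι • A)) psi7 = 0 ↔ associator A = 0 := by
  have hF := mixedForm_mem_weightSubmodule (ι • A)
  have hmem := Submodule.add_mem _
    (Submodule.smul_mem _ (6 : 𝕜)⁻¹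
      (wedge_mem_weightSubmodule hF (wedge_mem_weightSubmodule hF hF)))
    (wedge_mem_weightSubmodule hF psi7_mem_weightSubmodule)
  have hι_ne : ι ≠ 0 := by
    rintro rfl
    simp at hι
  rw [eq_zero_iff_of_mem_weightSubmodule eq_compl_ya_of_sum_degreeParity hmem, funext_iff]
  simp [cube_add_wedge_psi7_apply A hι, hι_ne]

theorem wedge_phi7_hstar_wedge_self_eq_zero (hA : associator A = 0) :
    wedge phi7 (hstar (wedge (mixedForm (ι • A)) (mixedForm (ι • A)))) = 0 := by
  have hF := mixedForm_mem_weightSubmodule (ι • A)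
  have hmem := wedge_mem_weightSubmodule phi7_mem_weightSubmodule
    (hstar_mem_weightSubmodule (m' := (3, 1)) (wedge_mem_weightSubmodule hF hF) (by decide))
  refine (eq_zero_iff_of_mem_weightSubmodule eq_compl_xj_of_sum_degreeParity hmem).mpr fun j => ?_
  rw [wedge_phi7_hstar_wedge_self, smul_dotProduct_associator_smul, hA, dotProduct_zero, mul_zero,
    mul_zero, mul_zero]

end Curvature

section Graph

variable {𝕜 : Type*} [NormedField 𝕜]

/-- The tangent vectors `∂_j + Σ_a A_{ja} ∂_a` of the graph of the linear map with Jacobian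
matrix `A`. -/
def graphVec (A : Matrix (Fin 3) (Fin 4) 𝕜) (j : Fin 3) : Fin 7 → 𝕜 :=
  Pi.single (xj j) 1 + ∑ a, A j a • Pi.single (ya a) 1

theorem graphVec_eq_vecCons (A : Matrix (Fin 3) (Fin 4) 𝕜) (j : Fin 3) :
    graphVec A j = ![if j = 0 then 1 else 0, if j = 1 then 1 else 0, if j = 2 then 1 else 0,
      A j 0, A j 1, A j 2, A j 3] := by
  funext i
  unfold graphVec
  fin_cases j <;> fin_cases i <;> simp +decide [Fin.sum_univ_four, Pi.single_apply]

theorem evalForm_psi7 (v : Fin 4 → Fin 7 → 𝕜) :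
    evalForm psi7 v =
      (Matrix.of fun i j => v i (![3, 4, 5, 6] j)).det +
      (Matrix.of fun i j => v i (![1, 2, 5, 6] j)).det +
      (Matrix.of fun i j => v i (![1, 2, 3, 4] j)).det +
      (Matrix.of fun i j => v i (![0, 2, 4, 6] j)).det -
      (Matrix.of fun i j => v i (![0, 2, 3, 5] j)).det -
      (Matrix.of fun i j => v i (![0, 1, 4, 5] j)).det -
      (Matrix.of fun i j => v i (![0, 1, 3, 6] j)).det := by
  have evalForm_single (g : Fin 4 → Fin 7) (hg : StrictMono g) {s : Finset (Fin 7)}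
      (hs : s = Finset.univ.image g) (c : 𝕜) :
      evalForm (Pi.single s c) v = c * (Matrix.of fun i j => v i (g j)).det := by
    rw [hs, evalForm_single_image hg]
  simp only [psi7_eq_add_single, evalForm_add]
  rw [evalForm_single ![3, 4, 5, 6] (by decide) (by decide),
    evalForm_single ![1, 2, 5, 6] (by decide) (by decide),
    evalForm_single ![1, 2, 3, 4] (by decide) (by decide),
    evalForm_single ![0, 2, 4, 6] (by decide) (by decide),
    evalForm_single ![0, 2, 3, 5] (by decide) (by decide),
    evalForm_single ![0, 1, 4, 5] (by decide) (by decide),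
    evalForm_single ![0, 1, 3, 6] (by decide) (by decide)]
  ring

theorem evalForm_psi7_graphVec (A : Matrix (Fin 3) (Fin 4) 𝕜) (w : Fin 7 → 𝕜) :
    evalForm psi7 ![graphVec A 0, graphVec A 1, graphVec A 2, w] =
      -∑ a, associator A a * (w (ya a) - ∑ j, A j a * w (xj j)) := by
  simp only [evalForm_psi7, graphVec_eq_vecCons, Matrix.det_succ_row _ (3 : Fin 4),
    Matrix.det_fin_three, Matrix.submatrix_apply, Matrix.of_apply]
  simp only [associator, Matrix.mulVec, dotProduct, omega, xj, ya, Matrix.det_fin_three,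
    Matrix.submatrix_apply, Matrix.of_apply, Matrix.cons_val, Matrix.cons_val',
    Matrix.cons_val_zero, Matrix.cons_val_one, Matrix.cons_val_fin_one, id_eq, Fin.sum_univ_three,
    Fin.sum_univ_four, Fin.succAbove, Fin.isValue, Fin.coe_ofNat_eq_mod, Fin.reduceLT,
    Fin.reduceEq, Fin.reduceSucc, Fin.reduceCastSucc, Fin.reduceCastAdd, Fin.reduceAddNat,
    Fin.castSucc_zero, Fin.castSucc_one, Fin.succ_zero_eq_one, Fin.succ_one_eq_two,
    Fin.lt_one_iff, not_lt_zero, lt_self_iff_false, zero_lt_one, zero_ne_one, one_ne_zero,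
    ↓reduceIte, Nat.succ_eq_add_one, Nat.reduceAdd, Nat.reduceMod, Nat.zero_mod, Nat.one_mod,
    Nat.mod_succ]
  ring

theorem forall_evalForm_psi7_graphVec_eq_zero_iff (A : Matrix (Fin 3) (Fin 4) 𝕜) :
    (∀ w, evalForm psi7 ![graphVec A 0, graphVec A 1, graphVec A 2, w] = 0) ↔
      associator A = 0 := by
  simp only [evalForm_psi7_graphVec, neg_eq_zero]
  refine ⟨fun h => funext fun a => ?_, fun h w => by simp [h]⟩
  have ya_eq_iff : ∀ b, ya b = ya a ↔ b = a := by decide +revert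
  simpa [Pi.single_apply, ya_eq_iff, (xj_lt_ya _ a).ne] using h (Pi.single (ya a) 1)

end Graph

theorem FSA_eq_mixedForm (f : (Fin 3 → ℝ) → (Fin 4 → ℝ)) (x : Fin 3 → ℝ) :
    FSA f x = mixedForm (Complex.I • (Matrix.of (pd f x)).map Complex.ofRealHom) := by
  ext s
  simp [FSA, gammaA, mixedForm, wedge_e1_e1 (xj_lt_ya _ _), Finset.mul_sum, Pi.single_apply,
    apply_ite]

theorem statement6_general (A : Matrix (Fin 3) (Fin 4) ℝ) (F : Form ℂ 7)
    (hF : F = mixedForm (Complex.I • A.map Complex.ofRealHom)) :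
    ((∀ w, evalForm psi7 ![graphVec A 0, graphVec A 1, graphVec A 2, w] = 0) ↔
      (6 : ℂ)⁻¹ • wedge F (wedge F F) + wedge F psi7 = 0) ∧
    ((∀ w, evalForm psi7 ![graphVec A 0, graphVec A 1, graphVec A 2, w] = 0) ↔
      (6 : ℂ)⁻¹ • wedge F (wedge F F) + wedge F psi7 = 0 ∧
        wedge phi7 (hstar (wedge F F)) = 0) := by
  have associator_map : associator (A.map Complex.ofRealHom) = 0 ↔ associator A = 0 := by
    simp only [funext_iff, ← map_associator, Pi.zero_apply, map_eq_zero]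
  subst hF
  rw [forall_evalForm_psi7_graphVec_eq_zero_iff, cube_add_wedge_psi7_eq_zero_iff _ Complex.I_sq,
    associator_map, iff_self_and]
  exact ⟨Iff.rfl, fun h => wedge_phi7_hstar_wedge_self_eq_zero _ (associator_map.mpr h)⟩

/-- Proposition 4.1.  The following are equivalent:
(1) the graph `S` is associative with an appropriate orientation
    (`*₇φ(v₁,v₂,v₃,·) = 0` on `B`);
(2) `(F_∇^S)³/6 + F_∇^S ∧ *₇φ = 0` on `B`;
(3) `(F_∇^S)³/6 + F_∇^S ∧ *₇φ = 0` and `φ ∧ *₇((F_∇^S)²) = 0` on `B`. -/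
theorem statement6 (B : Set (Fin 3 → ℝ)) (hB : IsOpen B)
    (f : (Fin 3 → ℝ) → (Fin 4 → ℝ)) (hf : ContDiffOn ℝ (⊤ : ℕ∞) f B) :
    ((∀ x ∈ B, ∀ w : Fin 7 → ℝ,
        evalForm psi7 ![vA f x 0, vA f x 1, vA f x 2, w] = 0) ↔
      (∀ x ∈ B,
        (6 : ℂ)⁻¹ • wedge (FSA f x) (wedge (FSA f x) (FSA f x)) +
          wedge (FSA f x) psi7 = 0)) ∧
    ((∀ x ∈ B, ∀ w : Fin 7 → ℝ,
        evalForm psi7 ![vA f x 0, vA f x 1, vA f x 2, w] = 0) ↔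
      (∀ x ∈ B,
        ((6 : ℂ)⁻¹ • wedge (FSA f x) (wedge (FSA f x) (FSA f x)) +
          wedge (FSA f x) psi7 = 0) ∧
        wedge phi7 (hstar (wedge (FSA f x) (FSA f x))) = 0)) := by
  have pointwise (x) := statement6_general (Matrix.of (pd f x)) (FSA f x) (FSA_eq_mixedForm f x)
  exact ⟨forall₂_congr fun x _ => (pointwise x).1, forall₂_congr fun x _ => (pointwise x).2⟩

end FMpaper
end
end
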